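/- arXiv:1401.7555 — 2 statements merged into one kernel-verified Lean document; each statement's English description precedes it below -/
import Mathlib

section
/- There exist a constant C > 0 and a real x₀ ≥ 3 such that for all real x ≥ x₀, π₂(x) ≤ C · x (log log x)² / (log x)². -/
/-- `twinPrimeCounting x` is the number of primes `p ≤ x` such that `p + 2` is
also prime. -/
noncomputable def twinPrimeCounting (x : ℝ) : ℕ :=
  ((Finset.Icc 1 ⌊x⌋₊).filter (fun p => p.Prime ∧ (p + 2).Prime)).card

open Finset

lemma tp_recip (m : ℕ) : ∑ p ∈ Nat.primesBelow (2 ^ (m + 1)), (1 / (p:ℝ)) ≤ 4 * (harmonic m : ℝ) := by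
  induction m with
  | zero =>
    have : Nat.primesBelow (2 ^ (0 + 1)) = ∅ := by decide
    rw [this]; simp
  | succ m ih =>
    have hsub : Nat.primesBelow (2 ^ (m + 1)) ⊆ Nat.primesBelow (2 ^ (m + 1 + 1)) := by
      intro p hp
      rw [Nat.mem_primesBelow] at *
      refine ⟨lt_trans hp.1 ?_, hp.2⟩
      exact Nat.pow_lt_pow_right (by norm_num) (by omega)
    rw [← Finset.sum_sdiff hsub, harmonic_succ]
    push_cast
    have hl2 : 0 < Real.log 2 := Real.log_pos (by norm_num)
    have key : ∑ p ∈ Nat.primesBelow (2 ^ (m + 1 + 1)) \ Nat.primesBelow (2 ^ (m + 1)), (1 / (p:ℝ))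
        ≤ 4 * ((m:ℝ) + 1)⁻¹ := by
      have h1 : ∀ p ∈ Nat.primesBelow (2 ^ (m + 1 + 1)) \ Nat.primesBelow (2 ^ (m + 1)),
          (1 / (p:ℝ)) ≤ Real.log p * (1 / (2 ^ (m+1) * ((m+1) * Real.log 2))) := by
        intro p hp
        rw [mem_sdiff, Nat.mem_primesBelow, Nat.mem_primesBelow] at hp
        have hge : 2 ^ (m+1) ≤ p := by
          by_contra hlt
          exact hp.2 ⟨by omega, hp.1.2⟩
        have hge' : (2:ℝ) ^ (m+1) ≤ p := by exact_mod_cast hge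
        have hlog : ((m:ℝ)+1) * Real.log 2 ≤ Real.log p := by
          have := Real.log_le_log (by positivity) hge'
          rw [Real.log_pow] at this
          exact_mod_cast this
        have hpos : (0:ℝ) < 2 ^ (m+1) := by positivity
        have hpos2 : 0 < ((m:ℝ)+1) * Real.log 2 := by positivity
        rw [mul_one_div, div_le_div_iff₀ (by linarith) (by positivity)]
        nlinarith
      refine (Finset.sum_le_sum h1).trans ?_
      rw [← Finset.sum_mul]
      have h2 : ∑ p ∈ Nat.primesBelow (2 ^ (m + 1 + 1)) \ Nat.primesBelow (2 ^ (m + 1)), Real.log p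
          ≤ Real.log 4 * 2 ^ (m+1+1) := by
        have := Chebyshev.theta_le_log4_mul_x (x := 2 ^ (m+1+1)) (by positivity)
        refine le_trans ?_ this
        rw [Chebyshev.theta_eq_sum_Icc]
        apply Finset.sum_le_sum_of_subset_of_nonneg
        · intro p hp
          rw [mem_sdiff, Nat.mem_primesBelow] at hp
          rw [mem_filter, mem_Icc]
          refine ⟨⟨by omega, Nat.le_floor ?_⟩, hp.1.2⟩
          exact_mod_cast hp.1.1.le
        · intro p hp _
          exact Real.log_natCast_nonneg p
      have h4 : Real.log 4 = 2 * Real.log 2 := by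
        rw [show (4:ℝ) = 2 ^ 2 by norm_num, Real.log_pow]; norm_num
      refine (mul_le_mul_of_nonneg_right h2 (by positivity)).trans (le_of_eq ?_)
      rw [h4]
      field_simp
      ring
    linarith

lemma tp_prod_lower (z : ℕ) :
    Real.log ((z:ℝ) + 1) ≤ ∏ p ∈ Nat.primesBelow (z+1), (1 - 1 / (p:ℝ))⁻¹ := by
  let f : ℕ →* ℝ := 
    { toFun := fun n => (n:ℝ)⁻¹
      map_one' := by simp
      map_mul' := by intro a b; push_cast; rw [mul_inv] }
  have hf : ∀ {p : ℕ}, p.Prime → ‖f p‖ < 1 := by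
    intro p hp
    have : (1:ℝ) < p := by exact_mod_cast hp.one_lt
    change ‖(p:ℝ)⁻¹‖ < 1
    rw [Real.norm_of_nonneg (by positivity)]
    exact inv_lt_one_of_one_lt₀ this
  have h := (EulerProduct.summable_and_hasSum_smoothNumbers_prod_primesBelow_geometric hf (z+1)).2
  have h1 := log_add_one_le_harmonic z
  push_cast at h1
  refine h1.trans ?_
  rw [harmonic_eq_sum_Icc]
  push_cast
  have h2 := hasSum_subtype_iff_indicator.mp h
  have h3 := sum_le_hasSum (Finset.Icc 1 z) (by
    intro i _
    apply Set.indicator_nonneg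
    intro j _
    change 0 ≤ (j:ℝ)⁻¹
    positivity) h2
  simp only [one_div]
  refine le_trans (le_of_eq ?_) h3
  apply Finset.sum_congr rfl
  intro i hi
  rw [mem_Icc] at hi
  rw [Set.indicator_of_mem (Nat.mem_smoothNumbers_of_lt (by omega) (by omega))]
  rfl

lemma tp_bonf (T : Finset ℕ) (k : ℕ) :
    (if T = ∅ then (1:ℝ) else 0) ≤ ∑ S ∈ T.powerset with S.card ≤ 2 * k, (-1:ℝ) ^ S.card := by
  split_ifs with h
  · subst h
    rw [powerset_empty, filter_singleton]; simp
  · have hc : T.card ≠ 0 := by simpa using h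
    obtain ⟨n, hn⟩ := Nat.exists_eq_succ_of_ne_zero hc
    have h1 := Int.alternating_sum_range_choose_eq_choose (n := n) (m := 2 * k)
    have h2 : ∑ S ∈ T.powerset with S.card ≤ 2 * k, (-1:ℝ) ^ S.card
        = ∑ j ∈ range (2*k+1), ((-1) ^ j * ((n + 1).choose j : ℝ)) := by
      rw [← Finset.sum_fiberwise_of_maps_to (s := T.powerset.filter (fun S => S.card ≤ 2*k)) (t := range (2*k+1)) (g := fun S => S.card)]
      · apply Finset.sum_congr rfl
        intro j hj
        rw [mem_range] at hj
        rw [Finset.sum_congr rfl (g := fun _ => (-1:ℝ)^j)]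
        · rw [sum_const, nsmul_eq_mul, mul_comm]
          congr 2
          rw [show n + 1 = T.card from hn.symm, ← card_powersetCard]
          congr 1
          ext S
          simp only [mem_filter, mem_powerset, mem_powersetCard]
          constructor
          · rintro ⟨⟨a, b⟩, c⟩; exact ⟨a, c⟩
          · rintro ⟨a, c⟩; exact ⟨⟨a, by omega⟩, c⟩
        · intro S hS
          rw [mem_filter] at hS
          rw [hS.2]
      · intro S hS
        rw [mem_filter] at hS
        rw [mem_range]; omega
    have h3 := congrArg (fun t : ℤ => (t:ℝ)) h1
    push_cast at h3
    rw [h2, h3]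
    rw [pow_mul]; simp

lemma tp_class (S : Finset ℕ) (hS : ∀ p ∈ S, p.Prime) (a : ℕ → ℕ) (N : ℕ) :
    |((((Icc 1 N).filter (fun n => ∀ p ∈ S, n ≡ a p [MOD p])).card : ℝ)) - N / (∏ p ∈ S, (p:ℝ))| ≤ 1 := by
  have hcop : (↑S : Set ℕ).Pairwise (Function.onFun Nat.Coprime id) := by
    intro p hp q hq hpq
    exact (Nat.coprime_primes (hS p hp) (hS q hq)).mpr hpq
  obtain ⟨v, hv⟩ := Nat.chineseRemainderOfFinset a id S (fun p hp => (hS p hp).ne_zero) hcop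
  have hd : 0 < ∏ p ∈ S, p := Finset.prod_pos (fun p hp => (hS p hp).pos)
  have heq : (Icc 1 N).filter (fun n => ∀ p ∈ S, n ≡ a p [MOD p]) =
      (Ioc 0 N).filter (fun n => n ≡ v [MOD (∏ p ∈ S, p)]) := by
    ext n
    simp only [mem_filter, mem_Icc, mem_Ioc]
    refine and_congr (by omega) ?_
    constructor
    · intro h
      rw [Nat.modEq_iff_dvd]
      push_cast
      apply Finset.prod_dvd_of_coprime
      · intro p hp q hq hpq
        exact Nat.isCoprime_iff_coprime.mpr (hcop hp hq hpq)
      · intro p hp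
        rw [← Nat.modEq_iff_dvd]
        exact (h p hp).trans (hv p hp).symm
    · intro h p hp
      exact (h.of_dvd (Finset.dvd_prod_of_mem _ hp)).trans (hv p hp)
  rw [heq]
  have h1 := Nat.Ioc_filter_modEq_card (a := 0) (b := N) hd v
  set d := ∏ p ∈ S, p with hdd
  have hdr : (∏ p ∈ S, (p:ℝ)) = d := by rw [hdd]; push_cast; rfl
  rw [hdr]
  have hdq : (0:ℚ) < d := by exact_mod_cast hd
  rw [max_eq_left] at h1
  · have e : ((N:ℚ) - v) / d - ((0:ℕ) - v) / d = N / d := by field_simp; push_cast; ring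
    have f1 := Int.floor_le (((N:ℚ) - v) / d)
    have f2 := Int.lt_floor_add_one (((N:ℚ) - v) / d)
    have f3 := Int.floor_le ((((0:ℕ):ℚ) - v) / d)
    have f4 := Int.lt_floor_add_one ((((0:ℕ):ℚ) - v) / d)
    have h2 := congrArg (fun t : ℤ => (t:ℚ)) h1
    simp only [Int.cast_natCast, Int.cast_sub] at h2
    have : |(((Ioc 0 N).filter (fun n => n ≡ v [MOD d])).card : ℚ) - N / d| ≤ 1 := by
      rw [h2, abs_le]; constructor <;> linarith
    have h5 := (Rat.cast_le (K := ℝ)).mpr this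
    push_cast at h5
    exact h5
  · apply sub_nonneg.mpr
    apply Int.floor_le_floor
    gcongr
    exact Nat.zero_le _

lemma tp_count (S : Finset ℕ) (hS : ∀ p ∈ S, p.Prime ∧ p ≠ 2) (N : ℕ) :
    |((((Icc 1 N).filter (fun n => ∀ p ∈ S, p ∣ n * (n + 2))).card : ℝ)) - N * ∏ p ∈ S, (2 / (p:ℝ))|
      ≤ 2 ^ S.card := by
  have h0 : ((Icc 1 N).filter (fun n => ∀ p ∈ S, p ∣ n * (n + 2))).card =
      ∑ U ∈ S.powerset, ((Icc 1 N).filter (fun n => ∀ p ∈ S, n ≡ (if p ∈ U then 0 else p - 2) [MOD p])).card := by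
    rw [Finset.card_eq_sum_card_fiberwise (f := fun n => S.filter (fun p => p ∣ n)) (t := S.powerset)]
    · apply Finset.sum_congr rfl
      intro U hU
      rw [mem_powerset] at hU
      congr 1
      rw [filter_filter]
      apply filter_congr
      intro n hn
      have hm : ∀ p ∈ S, (n ≡ p - 2 [MOD p] ↔ p ∣ n + 2) := by
        intro p hp
        have h2 := (hS p hp).1.two_le
        have e : (p - 2) + 2 = p := by omega
        rw [← Nat.modEq_zero_iff_dvd]
        have h3 : p ≡ 0 [MOD p] := by simp [Nat.ModEq]
        constructor
        · intro h
          have := h.add_right 2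
          rw [e] at this
          exact this.trans h3
        · intro h
          refine Nat.ModEq.add_right_cancel' 2 ?_
          rw [e]
          exact h.trans h3.symm
      constructor
      · rintro ⟨h1, h2⟩ p hp
        split_ifs with hpU
        · rw [← h2, mem_filter] at hpU
          exact (Nat.modEq_zero_iff_dvd).mpr hpU.2
        · rw [hm p hp]
          rcases (hS p hp).1.dvd_mul.mp (h1 p hp) with h | h
          · exact absurd (by rw [← h2, mem_filter]; exact ⟨hp, h⟩) hpU
          · exact h
      · intro h
        constructor
        · intro p hp
          have := h p hp
          split_ifs at this with hpU
          · exact ((Nat.modEq_zero_iff_dvd).mp this).mul_right _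
          · exact ((hm p hp).mp this).mul_left _
        · ext p
          rw [mem_filter]
          constructor
          · rintro ⟨hp, hd⟩
            by_contra hpU
            have := h p hp
            rw [if_neg hpU, hm p hp] at this
            have h2 : p ∣ 2 := (Nat.dvd_add_right hd).mp this
            exact (hS p hp).2 ((Nat.prime_dvd_prime_iff_eq (hS p hp).1 Nat.prime_two).mp h2)
          · intro hpU
            have := h p (hU hpU)
            rw [if_pos hpU] at this
            exact ⟨hU hpU, (Nat.modEq_zero_iff_dvd).mp this⟩
    · intro n _
      simp only [coe_powerset, Set.mem_preimage, Set.mem_powerset_iff, coe_subset]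
      exact filter_subset _ _
  rw [h0]
  have h1 : N * ∏ p ∈ S, (2 / (p:ℝ)) = ∑ U ∈ S.powerset, (N:ℝ) / (∏ p ∈ S, (p:ℝ)) := by
    rw [sum_const, card_powerset, prod_div_distrib, prod_const]
    simp; ring
  rw [h1]
  push_cast
  rw [← Finset.sum_sub_distrib]
  refine (Finset.abs_sum_le_sum_abs _ _).trans ?_
  refine (Finset.sum_le_sum (g := fun _ => (1:ℝ)) ?_).trans ?_
  · intro U _
    exact tp_class S (fun p hp => (hS p hp).1) _ N
  · simp

lemma tp_sieve (P : Finset ℕ) (hP : ∀ p ∈ P, p.Prime ∧ p ≠ 2) (N k : ℕ) (y : ℝ) (hy : 1 ≤ y) :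
    (((Icc 1 N).filter (fun n => ∀ p ∈ P, ¬ p ∣ n * (n + 2))).card : ℝ) ≤
      N * ∏ p ∈ P, (1 - 2 / (p:ℝ))
      + N * Real.exp (- (2 * k) + 2 * Real.exp 1 * ∑ p ∈ P, 1 / (p:ℝ))
      + y ^ (2 * k) * Real.exp (2 * P.card / y) := by
  set g : Finset ℕ → ℝ := fun S => ∏ p ∈ S, (2 / (p:ℝ)) with hg
  have hg0 : ∀ S, 0 ≤ g S := fun S => Finset.prod_nonneg (fun p _ => by positivity)
  set A : Finset ℕ → ℝ := fun S => (((Icc 1 N).filter (fun n => ∀ p ∈ S, p ∣ n * (n + 2))).card : ℝ) with hA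
  have step1 : (((Icc 1 N).filter (fun n => ∀ p ∈ P, ¬ p ∣ n * (n + 2))).card : ℝ) ≤
      ∑ S ∈ P.powerset with S.card ≤ 2 * k, (-1:ℝ) ^ S.card * A S := by
    have e1 : (((Icc 1 N).filter (fun n => ∀ p ∈ P, ¬ p ∣ n * (n + 2))).card : ℝ) =
        ∑ n ∈ Icc 1 N, (if P.filter (fun p => p ∣ n * (n+2)) = ∅ then (1:ℝ) else 0) := by
      rw [Finset.card_filter]
      push_cast
      apply Finset.sum_congr rfl
      intro n _
      simp only [filter_eq_empty_iff]
    rw [e1]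
    refine (Finset.sum_le_sum (fun n _ => tp_bonf _ k)).trans (le_of_eq ?_)
    have e2 : ∀ n ∈ Icc 1 N, ∑ S ∈ (P.filter (fun p => p ∣ n * (n+2))).powerset with S.card ≤ 2 * k, (-1:ℝ) ^ S.card
        = ∑ S ∈ P.powerset with S.card ≤ 2 * k, (-1:ℝ) ^ S.card * (if ∀ p ∈ S, p ∣ n * (n+2) then 1 else 0) := by
      intro n _
      simp only [mul_ite, mul_one, mul_zero]
      rw [← Finset.sum_filter, filter_filter]
      apply Finset.sum_congr _ (fun _ _ => rfl)
      ext S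
      simp only [mem_filter, mem_powerset, subset_iff]
      constructor
      · rintro ⟨h1, h2⟩
        exact ⟨fun p hp => (h1 hp).1, h2, fun p hp => (h1 hp).2⟩
      · rintro ⟨h1, h2, h3⟩
        exact ⟨fun p hp => ⟨h1 hp, h3 p hp⟩, h2⟩
    rw [Finset.sum_congr rfl e2, Finset.sum_comm]
    apply Finset.sum_congr rfl
    intro S _
    rw [← Finset.mul_sum, hA]
    simp only [Finset.card_filter]
    push_cast
    rfl
  have step2 : ∑ S ∈ P.powerset with S.card ≤ 2 * k, (-1:ℝ) ^ S.card * A S ≤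
      ∑ S ∈ P.powerset with S.card ≤ 2 * k, ((-1:ℝ) ^ S.card * (N * g S) + 2 ^ S.card) := by
    apply Finset.sum_le_sum
    intro S hS
    rw [mem_filter, mem_powerset] at hS
    have h := tp_count S (fun p hp => hP p (hS.1 hp)) N
    have h' := abs_le.mp h
    change -(2:ℝ) ^ S.card ≤ A S - N * g S ∧ A S - N * g S ≤ 2 ^ S.card at h'
    rcases neg_one_pow_eq_or ℝ S.card with e | e <;> rw [e] <;> linarith [h'.1, h'.2]
  have split : ∑ S ∈ P.powerset with S.card ≤ 2 * k, (-1:ℝ) ^ S.card * g S ≤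
      ∏ p ∈ P, (1 - 2 / (p:ℝ)) + ∑ S ∈ P.powerset with ¬ S.card ≤ 2 * k, g S := by
    have e : ∏ p ∈ P, (1 - 2 / (p:ℝ)) = ∑ S ∈ P.powerset, (-1:ℝ) ^ S.card * g S := by
      simp only [sub_eq_add_neg]
      rw [Finset.prod_one_add]
      apply Finset.sum_congr rfl
      intro S _
      rw [Finset.prod_neg]
    rw [e, ← Finset.sum_filter_add_sum_filter_not P.powerset (fun S => S.card ≤ 2 * k), add_assoc,
      ← Finset.sum_add_distrib]
    have : 0 ≤ ∑ S ∈ P.powerset with ¬ S.card ≤ 2 * k, ((-1:ℝ) ^ S.card * g S + g S) := by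
      apply Finset.sum_nonneg
      intro S _
      rcases neg_one_pow_eq_or ℝ S.card with e | e <;> rw [e] <;> linarith [hg0 S]
    linarith
  have tail : ∑ S ∈ P.powerset with ¬ S.card ≤ 2 * k, g S ≤
      Real.exp (- (2 * k) + 2 * Real.exp 1 * ∑ p ∈ P, 1 / (p:ℝ)) := by
    have h1 : ∑ S ∈ P.powerset with ¬ S.card ≤ 2 * k, g S ≤
        ∑ S ∈ P.powerset, Real.exp (-(2*k)) * ∏ p ∈ S, (Real.exp 1 * (2 / (p:ℝ))) := by
      have h2 : ∀ S : Finset ℕ, ∏ p ∈ S, (Real.exp 1 * (2 / (p:ℝ))) = Real.exp S.card * g S := by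
        intro S
        rw [Finset.prod_mul_distrib, prod_const, ← Real.exp_nat_mul, mul_one]
      refine le_trans (Finset.sum_le_sum ?_) (Finset.sum_le_sum_of_subset_of_nonneg (filter_subset _ _) ?_)
      · intro S hS
        rw [mem_filter] at hS
        rw [h2, ← mul_assoc, ← Real.exp_add]
        apply le_mul_of_one_le_left (hg0 S)
        apply Real.one_le_exp
        have : (2 * k : ℝ) ≤ S.card := by exact_mod_cast (by omega : 2 * k ≤ S.card)
        linarith
      · intro S _ _
        rw [h2]
        have := hg0 S
        positivity
    refine h1.trans ?_
    rw [← Finset.mul_sum, ← Finset.prod_one_add, Real.exp_add]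
    apply mul_le_mul_of_nonneg_left _ (Real.exp_pos _).le
    rw [Finset.mul_sum, Real.exp_sum]
    apply Finset.prod_le_prod
    · intro p _; positivity
    · intro p _
      have := Real.add_one_le_exp (2 * Real.exp 1 * (1 / (p:ℝ)))
      refine le_trans (le_of_eq ?_) this
      ring
  have err : ∑ S ∈ P.powerset with S.card ≤ 2 * k, (2:ℝ) ^ S.card ≤
      y ^ (2 * k) * Real.exp (2 * P.card / y) := by
    have hy0 : 0 < y := by linarith
    have h1 : ∑ S ∈ P.powerset with S.card ≤ 2 * k, (2:ℝ) ^ S.card ≤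
        ∑ S ∈ P.powerset, y ^ (2*k) * ∏ p ∈ S, (2 / y) := by
      refine le_trans (Finset.sum_le_sum ?_) (Finset.sum_le_sum_of_subset_of_nonneg (filter_subset _ _) ?_)
      · intro S hS
        rw [mem_filter] at hS
        rw [prod_const, div_pow, mul_div_assoc', le_div_iff₀ (by positivity), mul_comm]
        apply mul_le_mul_of_nonneg_right _ (by positivity)
        exact pow_le_pow_right₀ hy hS.2
      · intro S _ _
        rw [prod_const]; positivity
    refine h1.trans ?_
    rw [← Finset.mul_sum, ← Finset.prod_one_add]
    apply mul_le_mul_of_nonneg_left _ (by positivity)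
    rw [prod_const]
    have h3 : 1 + 2 / y ≤ Real.exp (2 / y) := by linarith [Real.add_one_le_exp (2 / y)]
    refine (pow_le_pow_left₀ (by positivity) h3 _).trans (le_of_eq ?_)
    rw [← Real.exp_nat_mul]
    congr 1; ring
  refine step1.trans (step2.trans ?_)
  rw [Finset.sum_add_distrib]
  have e3 : ∑ S ∈ P.powerset with S.card ≤ 2 * k, (-1:ℝ) ^ S.card * (N * g S) =
      N * ∑ S ∈ P.powerset with S.card ≤ 2 * k, (-1:ℝ) ^ S.card * g S := by
    rw [Finset.mul_sum]
    apply Finset.sum_congr rfl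
    intro S _; ring
  rw [e3]
  have h5 := mul_le_mul_of_nonneg_left (split.trans (add_le_add_right tail _)) (Nat.cast_nonneg (α := ℝ) N)
  rw [mul_add] at h5
  linarith

lemma tp_twin (z N k : ℕ) (hz : 2 ≤ z) :
    ((((Icc 1 N).filter (fun p => p.Prime ∧ (p + 2).Prime)).card : ℝ)) ≤
      z + (N * (4 / (Real.log ((z:ℝ) + 1)) ^ 2)
      + N * Real.exp (- (2 * k) + 2 * Real.exp 1 * ∑ p ∈ Nat.primesBelow (z+1), 1 / (p:ℝ))
      + (z:ℝ) ^ (2 * k) * Real.exp 2) := by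
  set P := (Nat.primesBelow (z+1)).erase 2 with hPdef
  have hP : ∀ p ∈ P, p.Prime ∧ p ≠ 2 := by
    intro p hp
    rw [hPdef, mem_erase, Nat.mem_primesBelow] at hp
    exact ⟨hp.2.2, hp.1⟩
  have h2mem : 2 ∈ Nat.primesBelow (z+1) := by
    rw [Nat.mem_primesBelow]; exact ⟨by omega, Nat.prime_two⟩
  have hzR : (2:ℝ) ≤ z := by exact_mod_cast hz
  have hs := tp_sieve P hP N k z (by linarith)
  have hcard : ((Icc 1 N).filter (fun p => p.Prime ∧ (p + 2).Prime)).card ≤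
      z + ((Icc 1 N).filter (fun n => ∀ p ∈ P, ¬ p ∣ n * (n + 2))).card := by
    have hsub : (Icc 1 N).filter (fun p => p.Prime ∧ (p + 2).Prime) ⊆
        Icc 1 z ∪ (Icc 1 N).filter (fun n => ∀ p ∈ P, ¬ p ∣ n * (n + 2)) := by
      intro n hn
      rw [mem_filter, mem_Icc] at hn
      rw [mem_union, mem_Icc, mem_filter, mem_Icc]
      by_cases h : n ≤ z
      · left; exact ⟨hn.1.1, h⟩
      · right
        refine ⟨hn.1, fun p hp hd => ?_⟩
        rw [hPdef, mem_erase, Nat.mem_primesBelow] at hp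
        rcases hp.2.2.dvd_mul.mp hd with h1 | h1
        · have := (Nat.prime_dvd_prime_iff_eq hp.2.2 hn.2.1).mp h1
          omega
        · have := (Nat.prime_dvd_prime_iff_eq hp.2.2 hn.2.2).mp h1
          omega
    refine (card_le_card hsub).trans ((card_union_le _ _).trans ?_)
    simp
  have hcard' : ((((Icc 1 N).filter (fun p => p.Prime ∧ (p + 2).Prime)).card : ℝ)) ≤
      z + (((Icc 1 N).filter (fun n => ∀ p ∈ P, ¬ p ∣ n * (n + 2))).card : ℝ) := by
    exact_mod_cast hcard
  have hlogpos : 0 < Real.log ((z:ℝ)+1) := Real.log_pos (by linarith)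
  have hprod : ∏ p ∈ P, (1 - 2 / (p:ℝ)) ≤ 4 / (Real.log ((z:ℝ) + 1)) ^ 2 := by
    have h1 : ∏ p ∈ P, (1 - 2 / (p:ℝ)) ≤ ∏ p ∈ P, (1 - 1 / (p:ℝ)) ^ 2 := by
      apply Finset.prod_le_prod
      · intro p hp
        have : (2:ℝ) ≤ p := by exact_mod_cast (hP p hp).1.two_le
        rw [sub_nonneg, div_le_one (by linarith)]
        exact this
      · intro p hp
        have : 0 ≤ (1 / (p:ℝ))^2 := by positivity
        have e : 2 / (p:ℝ) = 2 * (1 / (p:ℝ)) := by ring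
        rw [e]; nlinarith
    refine h1.trans ?_
    rw [Finset.prod_pow]
    have h2 := tp_prod_lower z
    rw [Finset.prod_inv_distrib, ← Finset.mul_prod_erase _ _ h2mem] at h2
    set Q := ∏ p ∈ P, (1 - 1 / (p:ℝ)) with hQ
    have hQ0 : 0 ≤ Q := by
      apply Finset.prod_nonneg
      intro p hp
      have : (2:ℝ) ≤ p := by exact_mod_cast (hP p hp).1.two_le
      rw [sub_nonneg, div_le_one (by linarith)]
      linarith
    change Real.log ((z:ℝ)+1) ≤ ((1 - 1 / ((2:ℕ):ℝ)) * Q)⁻¹ at h2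
    have h3 : Q ≤ 2 / Real.log ((z:ℝ)+1) := by
      have h4 := inv_anti₀ hlogpos h2
      rw [inv_inv] at h4
      push_cast at h4
      rw [div_eq_mul_inv]
      linarith
    calc Q ^ 2 ≤ (2 / Real.log ((z:ℝ)+1)) ^ 2 := pow_le_pow_left₀ hQ0 h3 2
      _ = _ := by rw [div_pow]; norm_num
  have hsum : ∑ p ∈ P, 1 / (p:ℝ) ≤ ∑ p ∈ Nat.primesBelow (z+1), 1 / (p:ℝ) := by
    apply Finset.sum_le_sum_of_subset_of_nonneg (erase_subset _ _)
    intro p _ _; positivity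
  have hPc : (P.card : ℝ) ≤ z := by
    have : P ⊆ Icc 1 z := by
      intro p hp
      rw [hPdef, mem_erase, Nat.mem_primesBelow] at hp
      rw [mem_Icc]
      exact ⟨hp.2.2.pos, by omega⟩
    have := card_le_card this
    simp only [Nat.card_Icc, Nat.add_sub_cancel] at this
    exact_mod_cast this
  refine hcard'.trans ?_
  refine add_le_add le_rfl (hs.trans ?_)
  gcongr
  rw [div_le_iff₀ (by linarith)]
  linarith

lemma tp_recip_x (x : ℝ) (hx : 0 < x) (hL : 1 ≤ Real.log x) (z : ℕ) (hz : (z:ℝ) ≤ x) :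
    ∑ p ∈ Nat.primesBelow (z+1), 1 / (p:ℝ) ≤ 12 + 4 * Real.log (Real.log x) := by
  set m := ⌈2 * Real.log x⌉₊ with hm
  have hm1 : 2 * Real.log x ≤ m := Nat.le_ceil _
  have hm2 : (m:ℝ) < 2 * Real.log x + 1 := Nat.ceil_lt_add_one (by linarith)
  have hx2 : x ≤ 2 ^ m := by
    have : x = Real.exp (Real.log x) := (Real.exp_log hx).symm
    rw [this, ← Real.exp_log (show (0:ℝ) < 2 by norm_num), ← Real.exp_nat_mul]
    apply Real.exp_le_exp.mpr
    have := Real.log_two_gt_d9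
    nlinarith
  have hz2 : z ≤ 2 ^ m := by exact_mod_cast hz.trans hx2
  have hz3 : z + 1 ≤ 2 ^ (m+1) := by
    have := Nat.one_le_two_pow (n := m)
    rw [pow_succ]; omega
  have h1 : ∑ p ∈ Nat.primesBelow (z+1), 1 / (p:ℝ) ≤ ∑ p ∈ Nat.primesBelow (2 ^ (m+1)), 1 / (p:ℝ) := by
    apply Finset.sum_le_sum_of_subset_of_nonneg
    · intro p hp
      rw [Nat.mem_primesBelow] at *
      exact ⟨by omega, hp.2⟩
    · intro p _ _; positivity
  have h2 := tp_recip m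
  have h3 := harmonic_le_one_add_log m
  have h4 : Real.log m ≤ 2 + Real.log (Real.log x) := by
    have : Real.log m ≤ Real.log (3 * Real.log x) := Real.log_le_log (by linarith) (by linarith)
    rw [Real.log_mul (by norm_num) (by linarith)] at this
    have h5 := Real.log_le_sub_one_of_pos (show (0:ℝ) < 3 by norm_num)
    linarith
  linarith

/-- The number of twin primes up to `x` is `O(x (log log x)² / (log x)²)`. -/
theorem twinPrimeCounting_bigO :
    ∃ C : ℝ, 0 < C ∧ ∃ x₀ : ℝ, 3 ≤ x₀ ∧ ∀ x : ℝ, x₀ ≤ x →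
      (twinPrimeCounting x : ℝ) ≤
        C * x * (Real.log (Real.log x)) ^ 2 / (Real.log x) ^ 2 := by
  have ev : ∀ᶠ x : ℝ in Filter.atTop, 1 ≤ Real.log (Real.log x) ∧
      52 * Real.log (Real.log x) ≤ Real.log x ∧ Real.log x ^ 2 ≤ Real.exp (Real.log x / 2) ∧
      1 ≤ Real.log x := by
    have hev : ∀ᶠ L : ℝ in Filter.atTop, 1 ≤ Real.log L ∧ 52 * Real.log L ≤ L ∧
        L ^ 2 ≤ Real.exp (L / 2) ∧ 1 ≤ L := by
      have e1 := Real.tendsto_log_atTop.eventually_ge_atTop 1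
      have e2 := Real.isLittleO_log_id_atTop.bound (show (0:ℝ) < 1 / 52 by norm_num)
      have e3 := (isLittleO_pow_exp_pos_mul_atTop 2 (show (0:ℝ) < 1/2 by norm_num)).bound (show (0:ℝ) < 1 by norm_num)
      filter_upwards [e1, e2, e3, Filter.eventually_ge_atTop 1] with L h1 h2 h3 h4
      refine ⟨h1, ?_, ?_, h4⟩
      · rw [Real.norm_of_nonneg (by linarith), id, Real.norm_of_nonneg (by linarith)] at h2
        linarith
      · rw [Real.norm_of_nonneg (by positivity), Real.norm_of_nonneg (by positivity), one_mul] at h3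
        convert h3 using 2
        ring
    exact Real.tendsto_log_atTop.eventually hev
  obtain ⟨x₁, hx₁⟩ := Filter.eventually_atTop.mp ev
  refine ⟨1 + 4 * 52 ^ 2 + Real.exp 72 + Real.exp 2, by positivity, max x₁ 3, le_max_right _ _, ?_⟩
  intro x hx
  obtain ⟨hl1, hl2, hl3, hL1⟩ := hx₁ x ((le_max_left _ _).trans hx)
  have hx3 : 3 ≤ x := (le_max_right _ _).trans hx
  have hx0 : 0 < x := by linarith
  set L := Real.log x with hL
  set l := Real.log L with hl
  have hxL : Real.exp L = x := Real.exp_log hx0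
  have hLl : Real.exp l = L := Real.exp_log (by linarith)
  set t := L / (52 * l) with ht
  have hl0 : 0 < l := by linarith
  have hL0 : 0 < L := by linarith
  have ht1 : 1 ≤ t := by rw [ht, le_div_iff₀ (by positivity)]; linarith
  set z := ⌊Real.exp t⌋₊ with hz
  set k := ⌈12 * l⌉₊ with hk
  have hk1 : 12 * l ≤ k := Nat.le_ceil _
  have hk2 : (k:ℝ) < 12 * l + 1 := Nat.ceil_lt_add_one (by linarith)
  have hzle : (z:ℝ) ≤ Real.exp t := Nat.floor_le (Real.exp_pos _).le
  have hzlt : Real.exp t < z + 1 := Nat.lt_floor_add_one _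
  have hz2 : 2 ≤ z := by
    apply Nat.le_floor
    have := Real.add_one_le_exp t
    push_cast; linarith
  have htL : t ≤ L / 2 := by
    rw [ht]
    apply div_le_div_of_nonneg_left hL0.le (by norm_num) (by linarith)
  have hhalf : Real.exp (L / 2) ≤ x / L ^ 2 := by
    rw [le_div_iff₀ (by positivity)]
    calc Real.exp (L/2) * L ^ 2 ≤ Real.exp (L/2) * Real.exp (L/2) := by gcongr
      _ = x := by rw [← Real.exp_add, ← hxL]; congr 1; ring
  have hz_half : (z:ℝ) ≤ x / L ^ 2 := (hzle.trans (Real.exp_le_exp.mpr htL)).trans hhalf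
  have hzx : (z:ℝ) ≤ x := by
    refine (hzle.trans (Real.exp_le_exp.mpr htL)).trans ?_
    rw [← hxL]; apply Real.exp_le_exp.mpr; linarith
  have hmain := tp_twin z ⌊x⌋₊ k hz2
  have hN : (⌊x⌋₊ : ℝ) ≤ x := Nat.floor_le hx0.le
  have hrec := tp_recip_x x hx0 hL1 z hzx
  -- main term
  have hlogz : t ≤ Real.log ((z:ℝ)+1) := by
    rw [Real.le_log_iff_exp_le (by positivity)]; exact hzlt.le
  have hT1 : 4 / (Real.log ((z:ℝ) + 1)) ^ 2 ≤ 4 * 52 ^ 2 * l ^ 2 / L ^ 2 := by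
    calc 4 / (Real.log ((z:ℝ) + 1)) ^ 2 ≤ 4 / t ^ 2 := by gcongr
      _ = _ := by rw [ht]; field_simp
  have hT2 : Real.exp (- (2 * k) + 2 * Real.exp 1 * ∑ p ∈ Nat.primesBelow (z+1), 1 / (p:ℝ))
      ≤ Real.exp 72 / L ^ 2 := by
    have e : Real.exp 72 / L ^ 2 = Real.exp (72 - 2 * l) := by
      rw [Real.exp_sub, ← hLl]
      congr 1
      rw [← Real.exp_nat_mul]; norm_num
    rw [e]
    apply Real.exp_le_exp.mpr
    have he := Real.exp_one_lt_d9
    have he0 := Real.exp_pos 1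
    have h6 : 2 * Real.exp 1 * ∑ p ∈ Nat.primesBelow (z+1), 1 / (p:ℝ) ≤ 2 * Real.exp 1 * (12 + 4 * l) := by
      gcongr
    nlinarith
  have hT3 : (z:ℝ) ^ (2 * k) ≤ x / L ^ 2 := by
    refine le_trans ?_ hhalf
    refine (pow_le_pow_left₀ (by positivity) hzle _).trans ?_
    rw [← Real.exp_nat_mul]
    apply Real.exp_le_exp.mpr
    push_cast
    calc 2 * (k:ℝ) * t ≤ 2 * (13 * l) * t := by gcongr; linarith
      _ = L / 2 := by rw [ht]; field_simp; norm_num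
  unfold twinPrimeCounting
  refine hmain.trans ?_
  have hl21 : 1 ≤ l ^ 2 := one_le_pow₀ hl1
  have hb : x / L ^ 2 ≤ x / L ^ 2 * l ^ 2 := le_mul_of_one_le_right (by positivity) hl21
  have g1 : (⌊x⌋₊:ℝ) * (4 / (Real.log ((z:ℝ) + 1)) ^ 2) ≤ x * (4 * 52 ^ 2 * l ^ 2 / L ^ 2) := by gcongr
  have g2 : (⌊x⌋₊:ℝ) * Real.exp (- (2 * k) + 2 * Real.exp 1 * ∑ p ∈ Nat.primesBelow (z+1), 1 / (p:ℝ))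
      ≤ x * (Real.exp 72 / L ^ 2) := by gcongr
  have g3 : (z:ℝ) ^ (2 * k) * Real.exp 2 ≤ x / L ^ 2 * l ^ 2 * Real.exp 2 := by
    gcongr; exact hT3.trans hb
  have g4 : x * (Real.exp 72 / L ^ 2) ≤ x / L ^ 2 * l ^ 2 * Real.exp 72 := by
    have := mul_le_mul_of_nonneg_right hb (Real.exp_pos 72).le
    refine le_trans (le_of_eq ?_) this
    ring
  have e5 : (1 + 4 * 52 ^ 2 + Real.exp 72 + Real.exp 2) * x * l ^ 2 / L ^ 2 =
      x / L ^ 2 * l ^ 2 + x * (4 * 52 ^ 2 * l ^ 2 / L ^ 2) + x / L ^ 2 * l ^ 2 * Real.exp 72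
        + x / L ^ 2 * l ^ 2 * Real.exp 2 := by ring
  rw [e5]
  linarith [hz_half.trans hb]
end

section
/- For every positive integer n, there exist a constant C > 0 and a real x₀ ≥ 3 such that for all real x ≥ x₀, π_{2n}(x) ≤ C · x (log log x)² / (log x)². -/
/-- `primePairCounting n x` is the number of primes `p ≤ x` such that `p + 2n`
is also prime. -/
noncomputable def primePairCounting (n : ℕ) (x : ℝ) : ℕ :=
  ((Finset.Icc 1 ⌊x⌋₊).filter (fun p => p.Prime ∧ (p + 2 * n).Prime)).card

section BrunSieve
open Finset

lemma bonf (R : Finset ℕ) (m : ℕ) (hm : Even m) :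
    (if R = ∅ then (1:ℝ) else 0) ≤ ∑ I ∈ R.powerset with #I ≤ m, (-1:ℝ) ^ #I := by
  rw [sum_filter]
  rw [Finset.sum_powerset_apply_card (fun k => if k ≤ m then (-1:ℝ)^k else 0)]
  rcases Nat.eq_zero_or_pos #R with h | h
  · rw [card_eq_zero] at h
    simp [h]
  · obtain ⟨r, hr⟩ : ∃ r, #R = r + 1 := ⟨#R - 1, by omega⟩
    have hne : R ≠ ∅ := by rintro rfl; simp at h
    rw [if_neg hne, hr]
    have h1 : ∑ k ∈ range (r + 1 + 1), (r+1).choose k • (if k ≤ m then (-1:ℝ)^k else 0)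
        = ∑ k ∈ range (m+1), (-1:ℝ)^k * (r+1).choose k := by
      have e : ∀ k, (r+1).choose k • (if k ≤ m then (-1:ℝ)^k else 0) =
          if k ≤ m then (-1:ℝ)^k * (r+1).choose k else 0 := by
        intro k; split_ifs <;> simp [mul_comm]
      simp_rw [e]
      rw [← sum_filter]
      apply sum_subset_zero_on_sdiff
      · intro k hk
        simp only [mem_filter, mem_range] at hk ⊢; omega
      · intro k hk
        simp only [mem_sdiff, mem_filter, mem_range] at hk
        rw [Nat.choose_eq_zero_of_lt (by omega)]; simp
      · simp
    rw [h1]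
    have := @Int.alternating_sum_range_choose_eq_choose r m
    have h2 : (∑ k ∈ range (m + 1), ((-1) ^ k * (r + 1).choose k : ℝ)) = (-1) ^ m * r.choose m := by
      exact_mod_cast this
    rw [h2, hm.neg_one_pow]; positivity

lemma count_class (n : ℕ) (J K : Finset ℕ) (hJK : Disjoint J K)
    (hp : ∀ p ∈ J ∪ K, p.Prime) (N : ℕ) :
    |(#{a ∈ range N | (∀ p ∈ J, p ∣ a) ∧ (∀ p ∈ K, p ∣ a + 2 * n)} : ℝ)
      - N / ∏ p ∈ J ∪ K, (p:ℝ)| ≤ 1 := by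
  have cop : Set.Pairwise ((J ∪ K : Finset ℕ) : Set ℕ) (Function.onFun Nat.Coprime (fun p : ℕ => p)) := by
    intro p h q h' hne
    exact (Nat.coprime_primes (hp p h) (hp q h')).2 hne
  obtain ⟨c, hc⟩ := Nat.chineseRemainderOfFinset
    (fun p => if p ∈ J then 0 else p * (2 * n) - 2 * n) (fun p : ℕ => p) (J ∪ K)
    (fun p h => (hp p h).ne_zero) cop
  set d := ∏ p ∈ J ∪ K, p with hd
  have hdpos : 0 < d := prod_pos fun p h => (hp p h).pos
  have key : ∀ a : ℕ, ((∀ p ∈ J, p ∣ a) ∧ (∀ p ∈ K, p ∣ a + 2 * n)) ↔ a ≡ c [MOD d] := by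
    intro a
    have hcJ : ∀ p ∈ J, p ∣ c := fun p h => by
      have := hc p (mem_union_left _ h)
      simp only [h, if_true] at this
      exact (Nat.modEq_zero_iff_dvd).1 this
    have hcK : ∀ p ∈ K, p ∣ c + 2 * n := fun p h => by
      have := hc p (mem_union_right _ h)
      have hn : p ∉ J := fun h' => disjoint_left.1 hJK h' h
      simp only [hn, if_false] at this
      have h2 := this.add_right (2 * n)
      have hle : 2 * n ≤ p * (2 * n) := Nat.le_mul_of_pos_left _ (hp p (mem_union_right _ h)).pos
      rw [Nat.sub_add_cancel hle] at h2
      exact (Nat.modEq_zero_iff_dvd).1 (h2.trans ((Nat.modEq_zero_iff_dvd).2 (dvd_mul_right _ _)))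
    rw [Nat.modEq_iff_dvd]
    constructor
    · rintro ⟨h1, h2⟩
      rw [hd]; push_cast
      apply Finset.prod_dvd_of_coprime
      · intro p h q h' hne
        have := cop h h' hne
        exact Nat.isCoprime_iff_coprime.2 this
      · intro p h
        rcases mem_union.1 h with h | h
        · exact dvd_sub (Int.natCast_dvd_natCast.2 (hcJ p h)) (Int.natCast_dvd_natCast.2 (h1 p h))
        · have := dvd_sub (Int.natCast_dvd_natCast.2 (hcK p h)) (Int.natCast_dvd_natCast.2 (h2 p h))
          push_cast at this
          simpa using this
    · intro h
      have hall : ∀ p ∈ J ∪ K, (p:ℤ) ∣ (c:ℤ) - a := fun p hpp =>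
        (Int.natCast_dvd_natCast.2 (dvd_prod_of_mem (fun p => p) hpp)).trans h
      constructor
      · intro p hpp
        have h1 := dvd_sub (Int.natCast_dvd_natCast.2 (hcJ p hpp)) (hall p (mem_union_left _ hpp))
        rw [sub_sub_cancel] at h1
        exact_mod_cast h1
      · intro p hpp
        have h1 := dvd_sub (Int.natCast_dvd_natCast.2 (hcK p hpp)) (hall p (mem_union_right _ hpp))
        have e : ((c + 2 * n : ℕ):ℤ) - ((c:ℤ) - a) = ((a + 2 * n : ℕ) : ℤ) := by push_cast; ring
        rw [e] at h1
        exact_mod_cast h1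
  simp_rw [key]
  have hcard : #{a ∈ range N | a ≡ c [MOD d]} = N / d + if c % d < N % d then 1 else 0 := by
    rw [← Nat.count_modEq_card N hdpos, Nat.count_eq_card_filter_range]
  have hdc : (∏ p ∈ J ∪ K, (p:ℝ)) = (d:ℝ) := by rw [hd]; push_cast; rfl
  rw [hdc, hcard]
  have hdr : (0:ℝ) < d := by exact_mod_cast hdpos
  have e1 : (N:ℝ) / d = (N / d : ℕ) + (N % d : ℕ) / (d:ℝ) := by
    have := Nat.div_add_mod N d
    rw [eq_comm, ← eq_sub_iff_add_eq', eq_comm, sub_eq_iff_eq_add, div_eq_iff hdr.ne', add_mul, div_mul_cancel₀ _ hdr.ne']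
    have h3 : ((d * (N / d) + N % d : ℕ):ℝ) = N := by rw [this]
    push_cast at h3 ⊢
    linarith
  have e2 : ((N % d : ℕ) : ℝ) / d ≤ 1 := by
    rw [div_le_one hdr]; exact_mod_cast (Nat.mod_lt _ hdpos).le
  have e3 : (0:ℝ) ≤ ((N % d : ℕ) : ℝ) / d := by positivity
  rw [e1, abs_le]
  push_cast
  split_ifs <;> constructor <;> linarith

lemma count_dvd (n : ℕ) (I : Finset ℕ) (hI : ∀ p ∈ I, p.Prime ∧ ¬ p ∣ 2 * n) (N : ℕ) :
    |(#{a ∈ range N | ∀ p ∈ I, p ∣ a ∨ p ∣ a + 2 * n} : ℝ) - N * ∏ p ∈ I, (2 / (p:ℝ))|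
      ≤ 2 ^ #I := by
  have h1 : (#{a ∈ range N | ∀ p ∈ I, p ∣ a ∨ p ∣ a + 2 * n} : ℝ) =
      ∑ J ∈ I.powerset, (#{a ∈ range N | (∀ p ∈ J, p ∣ a) ∧ (∀ p ∈ I \ J, p ∣ a + 2 * n)} : ℝ) := by
    simp_rw [card_filter]
    push_cast
    rw [sum_comm]
    apply sum_congr rfl
    intro a _
    have e1 : (if ∀ p ∈ I, p ∣ a ∨ p ∣ a + 2 * n then (1:ℝ) else 0) =
        ∏ p ∈ I, ((if p ∣ a then (1:ℝ) else 0) + (if p ∣ a + 2 * n then (1:ℝ) else 0)) := by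
      have e0 := Finset.prod_ite_zero (s := I) (p := fun p => p ∣ a ∨ p ∣ a + 2 * n) (f := fun _ => (1:ℝ))
      rw [prod_const_one] at e0
      refine Eq.trans (by congr) (e0.symm.trans ?_)
      apply prod_congr rfl
      intro p hp
      by_cases h : p ∣ a <;> by_cases h' : p ∣ a + 2 * n <;> simp [h, h']
      exact absurd ((Nat.dvd_add_right h).1 h') (hI p hp).2
    rw [e1, prod_add]
    apply sum_congr rfl
    intro J _
    rw [prod_ite_zero, prod_ite_zero]
    rw [prod_const_one, prod_const_one, ite_and, mul_ite, mul_one, mul_zero]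
    split_ifs <;> rfl
  have h2 : (N:ℝ) * ∏ p ∈ I, (2 / (p:ℝ)) = ∑ J ∈ I.powerset, N / ∏ p ∈ I, (p:ℝ) := by
    rw [sum_const, card_powerset, prod_div_distrib, prod_const]
    simp; ring
  rw [h1, h2, ← sum_sub_distrib]
  refine (abs_sum_le_sum_abs _ _).trans ?_
  have : ((2:ℝ) ^ #I) = ∑ J ∈ I.powerset, 1 := by simp
  rw [this]
  apply sum_le_sum
  intro J hJ
  have hu : J ∪ (I \ J) = I := union_sdiff_of_subset (mem_powerset.1 hJ)
  have := count_class n J (I \ J) disjoint_sdiff (by rw [hu]; exact fun p h => (hI p h).1) N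
  rwa [hu] at this

lemma sieve (n : ℕ) (T : Finset ℕ) (hT : ∀ p ∈ T, p.Prime ∧ ¬ p ∣ 2 * n) (N m : ℕ) (hm : Even m) :
    (#{a ∈ range N | ∀ p ∈ T, ¬ (p ∣ a ∨ p ∣ a + 2 * n)} : ℝ) ≤
      N * ∑ I ∈ T.powerset with #I ≤ m, (-1:ℝ) ^ #I * ∏ p ∈ I, (2 / (p:ℝ))
      + ∑ I ∈ T.powerset with #I ≤ m, (2:ℝ) ^ #I := by
  classical
  calc (#{a ∈ range N | ∀ p ∈ T, ¬ (p ∣ a ∨ p ∣ a + 2 * n)} : ℝ)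
      ≤ ∑ a ∈ range N, ∑ I ∈ T.powerset with #I ≤ m,
        (-1:ℝ) ^ #I * (if ∀ p ∈ I, p ∣ a ∨ p ∣ a + 2 * n then 1 else 0) := by
        rw [card_filter]; push_cast
        apply sum_le_sum
        intro a _
        have hb := bonf {p ∈ T | p ∣ a ∨ p ∣ a + 2 * n} m hm
        refine (le_of_eq ?_).trans (hb.trans (le_of_eq ?_))
        · simp only [filter_eq_empty_iff]
        · simp_rw [mul_ite, mul_one, mul_zero]
          rw [← sum_filter]
          apply sum_congr _ (fun _ _ => rfl)
          ext I
          simp only [mem_filter, mem_powerset, subset_iff]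
          grind
    _ = ∑ I ∈ T.powerset with #I ≤ m, (-1:ℝ) ^ #I *
          (#{a ∈ range N | ∀ p ∈ I, p ∣ a ∨ p ∣ a + 2 * n} : ℝ) := by
        rw [sum_comm]
        apply sum_congr rfl
        intro I _
        rw [← mul_sum, card_filter]; push_cast; rfl
    _ ≤ ∑ I ∈ T.powerset with #I ≤ m, ((-1:ℝ) ^ #I * (N * ∏ p ∈ I, (2 / (p:ℝ))) + 2 ^ #I) := by
        apply sum_le_sum
        intro I hI
        have hI' := mem_powerset.1 (mem_filter.1 hI).1
        have := abs_le.1 (count_dvd n I (fun p h => hT p (hI' h)) N)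
        rcases neg_one_pow_eq_or ℝ #I with h | h <;> rw [h] <;> linarith [this.1, this.2]
    _ = _ := by
        rw [sum_add_distrib, mul_sum]
        congr 1
        apply sum_congr rfl
        intro I _; ring

lemma main_tail (T : Finset ℕ) (m : ℕ) (S : ℝ) (hS : ∑ p ∈ T, (1 / (p:ℝ)) ≤ S) :
    ∑ I ∈ T.powerset with #I ≤ m, (-1:ℝ) ^ #I * ∏ p ∈ I, (2 / (p:ℝ)) ≤
      ∏ p ∈ T, (1 - 2 / (p:ℝ)) + Real.exp (6 * S - m) := by
  classical
  have h1 : ∏ p ∈ T, (1 - 2 / (p:ℝ)) = ∑ I ∈ T.powerset, (-1:ℝ) ^ #I * ∏ p ∈ I, (2 / (p:ℝ)) := by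
    simp_rw [sub_eq_add_neg]
    rw [prod_one_add]
    apply sum_congr rfl
    intro I _
    rw [prod_neg]
  rw [h1, ← sum_filter_add_sum_filter_not T.powerset (fun I => #I ≤ m)]
  have h2 : -∑ I ∈ T.powerset with ¬ #I ≤ m, (-1:ℝ) ^ #I * ∏ p ∈ I, (2 / (p:ℝ)) ≤
      Real.exp (6 * S - m) := by
    rw [← sum_neg_distrib]
    calc _ ≤ ∑ I ∈ T.powerset with ¬ #I ≤ m, Real.exp (-m) * ∏ p ∈ I, (Real.exp 1 * (2 / (p:ℝ))) := by
          apply sum_le_sum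
          intro I hI
          have hI' := (mem_filter.1 hI).2
          have hpos : 0 ≤ ∏ p ∈ I, (2 / (p:ℝ)) := prod_nonneg fun _ _ => by positivity
          rw [prod_mul_distrib, prod_const, ← mul_assoc, ← Real.exp_nat_mul, ← Real.exp_add, ← neg_mul]
          apply mul_le_mul_of_nonneg_right _ hpos
          have : (1:ℝ) ≤ Real.exp (-m + #I * 1) := by
            apply Real.one_le_exp
            have : (m:ℝ) ≤ #I := by exact_mod_cast (by omega : m ≤ #I)
            linarith
          refine le_trans ?_ this
          rcases neg_one_pow_eq_or ℝ #I with h | h <;> rw [h] <;> norm_num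
      _ ≤ ∑ I ∈ T.powerset, Real.exp (-m) * ∏ p ∈ I, (Real.exp 1 * (2 / (p:ℝ))) := by
          apply sum_le_sum_of_subset_of_nonneg (filter_subset _ _)
          intro I _ _
          exact mul_nonneg (by positivity) (prod_nonneg fun _ _ => by positivity)
      _ = Real.exp (-m) * ∏ p ∈ T, (1 + Real.exp 1 * (2 / (p:ℝ))) := by
          rw [← mul_sum, prod_one_add]
      _ ≤ Real.exp (-m) * Real.exp (∑ p ∈ T, Real.exp 1 * (2 / (p:ℝ))) := by
          rw [Real.exp_sum]
          gcongr with p hp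
          linarith [Real.add_one_le_exp (Real.exp 1 * (2 / (p:ℝ)))]
      _ ≤ _ := by
          rw [← Real.exp_add]
          apply Real.exp_le_exp.2
          have e : ∑ p ∈ T, Real.exp 1 * (2 / (p:ℝ)) = Real.exp 1 * 2 * ∑ p ∈ T, (1 / (p:ℝ)) := by
            rw [mul_sum]; apply sum_congr rfl; intros; ring
          rw [e]
          have h0 : 0 ≤ ∑ p ∈ T, (1 / (p:ℝ)) := sum_nonneg fun _ _ => by positivity
          have := Real.exp_one_lt_d9
          nlinarith
  linarith

lemma err_tail (T : Finset ℕ) (m z : ℕ) (hz : 1 ≤ z) (hT : #T ≤ z) :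
    ∑ I ∈ T.powerset with #I ≤ m, (2:ℝ) ^ #I ≤ Real.exp 2 * (z:ℝ) ^ m := by
  have hz' : (1:ℝ) ≤ z := by exact_mod_cast hz
  have hz0 : (0:ℝ) < z := by linarith
  calc _ ≤ ∑ I ∈ T.powerset with #I ≤ m, (z:ℝ)^m * ∏ p ∈ I, (2 / (z:ℝ)) := by
        apply sum_le_sum
        intro I hI
        have hI' := (mem_filter.1 hI).2
        rw [prod_const, div_pow, mul_div_assoc', le_div_iff₀ (by positivity), mul_comm]
        gcongr
    _ ≤ ∑ I ∈ T.powerset, (z:ℝ)^m * ∏ p ∈ I, (2 / (z:ℝ)) := by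
        apply sum_le_sum_of_subset_of_nonneg (filter_subset _ _)
        intro I _ _
        exact mul_nonneg (by positivity) (prod_nonneg fun _ _ => by positivity)
    _ = (z:ℝ)^m * (1 + 2 / z) ^ #T := by
        rw [← mul_sum, ← prod_one_add, prod_const]
    _ ≤ (z:ℝ)^m * Real.exp 2 := by
        gcongr
        calc (1 + 2 / (z:ℝ)) ^ #T ≤ (Real.exp (2/z)) ^ #T := by
              gcongr; linarith [Real.add_one_le_exp (2/(z:ℝ))]
          _ = Real.exp (#T * (2 / z)) := by rw [← Real.exp_nat_mul]
          _ ≤ _ := by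
              apply Real.exp_le_exp.2
              rw [mul_div_assoc', div_le_iff₀ hz0]
              have : (#T:ℝ) ≤ z := by exact_mod_cast hT
              linarith
    _ = _ := mul_comm _ _


lemma prod_bound (z : ℕ) (hz : 2 ≤ z) :
    ∏ p ∈ Nat.primesBelow z, (1 - 1 / (p:ℝ)) ≤ 1 / Real.log z := by
  let f : ℕ →* ℝ := ⟨⟨fun n => (n:ℝ)⁻¹, by simp⟩, by intro a b; simp [mul_comm]⟩
  have hf : ∀ n, f n = (n:ℝ)⁻¹ := fun _ => rfl
  have h := EulerProduct.summable_and_hasSum_smoothNumbers_prod_primesBelow_geometric (f := f)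
    (by intro p hp
        rw [hf, Real.norm_of_nonneg (by positivity)]
        exact inv_lt_one_of_one_lt₀ (by exact_mod_cast hp.one_lt)) z
  have hmem : ∀ i : Fin (z-1), (i.1 + 1) ∈ z.smoothNumbers := by
    intro i
    apply Nat.mem_smoothNumbers_of_lt (by omega)
    have := i.2; omega
  have h2 : ∑ i : Fin (z-1), f (i.1+1) ≤ ∏ p ∈ Nat.primesBelow z, (1 - f p)⁻¹ := by
    let e : Fin (z-1) ↪ z.smoothNumbers := ⟨fun i => ⟨i.1+1, hmem i⟩, by
      intro i j hij; simp at hij; exact Fin.ext hij⟩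
    have := sum_le_hasSum (Finset.univ.map e) (fun m _ => by rw [hf]; positivity) h.2
    rw [sum_map] at this
    exact this
  have h3 : Real.log z ≤ ∑ i : Fin (z-1), f (i.1+1) := by
    have := log_add_one_le_harmonic (z-1)
    rw [Nat.sub_add_cancel (by omega)] at this
    rw [harmonic] at this
    push_cast at this
    rw [Fin.sum_univ_eq_sum_range (fun i => f (i+1))]
    simp only [hf]; push_cast; exact this
  have hlog : 0 < Real.log z := Real.log_pos (by exact_mod_cast (by omega : 1 < z))
  have h4 := h3.trans h2
  rw [prod_inv_distrib] at h4
  simp only [hf, ← one_div] at h4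
  have hpos : 0 < ∏ p ∈ Nat.primesBelow z, (1 - 1 / (p:ℝ)) := by
    apply prod_pos
    intro p hp
    have hp1 : (1:ℝ) < p := by exact_mod_cast (Nat.prime_of_mem_primesBelow hp).one_lt
    rw [sub_pos, div_lt_one (by linarith)]; exact hp1
  rw [le_div_iff₀ hpos] at h4
  rw [le_div_iff₀ hlog]; linarith

lemma recip_aux (K : ℕ) :
    ∑ p ∈ Nat.primesBelow (2 ^ (K+1)), (1 / (p:ℝ)) ≤ 4 * (harmonic K : ℝ) := by
  induction K with
  | zero => 
    have : Nat.primesBelow (2^(0+1)) = ∅ := by decide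
    rw [this]; simp
  | succ K ih =>
    rw [harmonic_succ]
    push_cast
    set A := Nat.primesBelow (2^(K+1+1)) with hA
    have hsplit : ∑ p ∈ A, (1 / (p:ℝ)) = ∑ p ∈ A with p < 2^(K+1), (1 / (p:ℝ)) +
        ∑ p ∈ A with ¬ p < 2^(K+1), (1 / (p:ℝ)) := (sum_filter_add_sum_filter_not _ _ _).symm
    have h1 : ∑ p ∈ A with p < 2^(K+1), (1 / (p:ℝ)) ≤ ∑ p ∈ Nat.primesBelow (2 ^ (K+1)), (1 / (p:ℝ)) := by
      apply sum_le_sum_of_subset_of_nonneg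
      · intro p hp
        simp only [hA, mem_filter, Nat.mem_primesBelow] at hp ⊢
        exact ⟨hp.2, hp.1.2⟩
      · intros; positivity
    set B := A.filter (fun p => ¬ p < 2^(K+1)) with hB
    have hpow : (0:ℝ) < 2^(K+1) := by positivity
    have h2 : ∑ p ∈ B, (1 / (p:ℝ)) ≤ #B / 2^(K+1) := by
      rw [div_eq_mul_one_div, ← nsmul_eq_mul]
      apply sum_le_card_nsmul
      intro p hp
      have := (mem_filter.1 hp).2
      apply one_div_le_one_div_of_le hpow
      exact_mod_cast not_lt.1 this
    have h3 : #B * ((K+1) * Real.log 2) ≤ Real.log 4 * 2^(K+2) := by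
      have ht := Chebyshev.theta_le_log4_mul_x (x := (2^(K+2) : ℝ)) (by positivity)
      refine le_trans ?_ ht
      have he : (2^(K+2) : ℝ) = ((2^(K+2) : ℕ) : ℝ) := by push_cast; rfl
      rw [he, Chebyshev.theta_eq_sum_primesLE_log, ← nsmul_eq_mul]
      calc #B • ((K+1:ℝ) * Real.log 2) ≤ ∑ p ∈ B, Real.log p := by
            apply card_nsmul_le_sum
            intro p hp
            have := (mem_filter.1 hp).2
            have h5 : ((2:ℝ)^(K+1)) ≤ p := by exact_mod_cast not_lt.1 this
            have := Real.log_le_log hpow h5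
            rw [Real.log_pow] at this
            push_cast at this; exact this
        _ ≤ _ := by
            apply sum_le_sum_of_subset_of_nonneg
            · intro p hp
              have hp' := (mem_filter.1 hp).1
              rw [hA, Nat.mem_primesBelow] at hp'
              rw [Nat.primesLE, Nat.mem_primesBelow]
              exact ⟨Nat.lt_succ_of_lt hp'.1, hp'.2⟩
            · intro p _ _
              exact Real.log_natCast_nonneg p
    have h4 : (#B:ℝ) / 2^(K+1) ≤ 4 * (K+1:ℝ)⁻¹ := by
      have l4 : Real.log 4 = 2 * Real.log 2 := by
        rw [show (4:ℝ) = 2^2 by norm_num, Real.log_pow]; norm_num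
      have l2 : 0 < Real.log 2 := Real.log_pos (by norm_num)
      rw [l4] at h3
      have h6 : (#B:ℝ) * (K+1) ≤ 4 * 2^(K+1) := by
        have : ((#B:ℝ) * (K+1)) * Real.log 2 ≤ (4 * 2^(K+1)) * Real.log 2 := by
          rw [pow_succ 2 (K+1)] at h3; linarith
        exact le_of_mul_le_mul_right this l2
      rw [div_le_iff₀ hpow, mul_assoc, mul_comm (_⁻¹), ← mul_assoc, ← div_eq_mul_inv, le_div_iff₀ (by positivity)]
      exact h6
    rw [hsplit]; linarith

lemma recip_bound (z K : ℕ) (h : z ≤ 2^(K+1)) :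
    ∑ p ∈ Nat.primesBelow z, (1 / (p:ℝ)) ≤ 4 * (1 + Real.log K) := by
  have h1 := recip_aux K
  have h2 := harmonic_le_one_add_log K
  have h3 : ∑ p ∈ Nat.primesBelow z, (1 / (p:ℝ)) ≤ ∑ p ∈ Nat.primesBelow (2 ^ (K+1)), (1 / (p:ℝ)) := by
    apply sum_le_sum_of_subset_of_nonneg
    · intro p hp
      rw [Nat.mem_primesBelow] at hp ⊢
      exact ⟨by omega, hp.2⟩
    · intros; positivity
  linarith

lemma prodT_bound (n : ℕ) (hn : 0 < n) : ∃ c : ℝ, 0 < c ∧ ∀ z : ℕ, 2 ≤ z →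
    ∏ p ∈ Nat.primesBelow z with ¬ p ∣ 2 * n, (1 - 2 / (p:ℝ)) ≤ c / (Real.log z)^2 := by
  set D := ∏ p ∈ (2*n).primeFactors, (1 - 1 / (p:ℝ)) with hD
  have fac : ∀ p : ℕ, p.Prime → 0 < 1 - 1 / (p:ℝ) ∧ 1 - 1 / (p:ℝ) ≤ 1 := by
    intro p hp
    have hp1 : (1:ℝ) < p := by exact_mod_cast hp.one_lt
    have : 1 / (p:ℝ) < 1 := by rw [div_lt_one (by linarith)]; exact hp1
    have : 0 ≤ 1 / (p:ℝ) := by positivity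
    constructor <;> linarith
  have hDpos : 0 < D := prod_pos fun p hp => (fac p (Nat.prime_of_mem_primeFactors hp)).1
  refine ⟨(1/D)^2, by positivity, fun z hz => ?_⟩
  have hb := prod_bound z hz
  have hlog : 0 < Real.log z := Real.log_pos (by exact_mod_cast (by omega : 1 < z))
  rw [← prod_filter_mul_prod_filter_not (Nat.primesBelow z) (fun p => ¬ p ∣ 2 * n)] at hb
  set P := ∏ p ∈ Nat.primesBelow z with ¬ p ∣ 2 * n, (1 - 1 / (p:ℝ)) with hP
  have hPpos : 0 < P := prod_pos fun p hp => (fac p (Nat.prime_of_mem_primesBelow (mem_filter.1 hp).1)).1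
  have hQ : D ≤ ∏ p ∈ Nat.primesBelow z with ¬ ¬ p ∣ 2 * n, (1 - 1 / (p:ℝ)) := by
    apply prod_le_prod_of_subset_of_le_one
    · intro p hp
      simp only [mem_filter, not_not, Nat.mem_primesBelow] at hp
      exact Nat.mem_primeFactors.2 ⟨hp.1.2, hp.2, by omega⟩
    · intro p hp
      exact (fac p (Nat.prime_of_mem_primeFactors hp)).1.le
    · intro p hp _
      exact (fac p (Nat.prime_of_mem_primeFactors hp)).2
  have hPD : P ≤ (1/D) / Real.log z := by
    rw [le_div_iff₀ hlog, le_div_iff₀ hDpos]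
    rw [le_div_iff₀ hlog] at hb
    have : P * D * Real.log z ≤ 1 := le_trans (by gcongr) hb
    linarith
  calc _ ≤ P^2 := by
        rw [hP, ← prod_pow]
        apply prod_le_prod
        · intro p hp
          obtain ⟨h1, h2⟩ := mem_filter.1 hp
          have hp2 : (2:ℝ) ≤ p := by exact_mod_cast (Nat.prime_of_mem_primesBelow h1).two_le
          rw [sub_nonneg, div_le_one (by linarith)]; exact hp2
        · intro p hp
          have : (1 - 1 / (p:ℝ))^2 = 1 - 2 / p + (1/(p:ℝ))^2 := by ring
          rw [this]; nlinarith [sq_nonneg (1/(p:ℝ))]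
    _ ≤ ((1/D) / Real.log z)^2 := by gcongr
    _ = _ := by ring

lemma combine (n : ℕ) (hn : 0 < n) : ∃ c : ℝ, 0 < c ∧ ∀ (x : ℝ) (z m K : ℕ), 2 ≤ z → Even m →
    z ≤ 2 ^ (K+1) →
    (primePairCounting n x : ℝ) ≤ z + (⌊x⌋₊ + 1 : ℕ) *
      (c / (Real.log z)^2 + Real.exp (6 * (4 * (1 + Real.log K)) - m)) + Real.exp 2 * (z:ℝ)^m := by
  obtain ⟨c, hc, hcz⟩ := prodT_bound n hn
  refine ⟨c, hc, fun x z m K hz hm hK => ?_⟩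
  set T := (Nat.primesBelow z).filter (fun p => ¬ p ∣ 2 * n) with hTdef
  have hT : ∀ p ∈ T, p.Prime ∧ ¬ p ∣ 2 * n := fun p hp =>
    ⟨Nat.prime_of_mem_primesBelow (mem_filter.1 hp).1, (mem_filter.1 hp).2⟩
  have hs := sieve n T hT (⌊x⌋₊ + 1) m hm
  have hS : ∑ p ∈ T, (1 / (p:ℝ)) ≤ 4 * (1 + Real.log K) := by
    refine le_trans ?_ (recip_bound z K hK)
    apply sum_le_sum_of_subset_of_nonneg (filter_subset _ _)
    intros; positivity
  have hmt := main_tail T m _ hS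
  have hcard : #T ≤ z := by
    calc #T ≤ #(range z) := card_le_card (by
          intro p hp
          rw [mem_range]
          exact Nat.lt_of_mem_primesBelow (mem_filter.1 hp).1)
      _ = z := card_range z
  have het := err_tail T m z (by omega) hcard
  have hcount : primePairCounting n x ≤
      z + #{a ∈ range (⌊x⌋₊ + 1) | ∀ p ∈ T, ¬ (p ∣ a ∨ p ∣ a + 2 * n)} := by
    unfold primePairCounting
    calc _ ≤ #(range z ∪ {a ∈ range (⌊x⌋₊ + 1) | ∀ p ∈ T, ¬ (p ∣ a ∨ p ∣ a + 2 * n)}) := by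
          apply card_le_card
          intro a ha
          rw [mem_filter, mem_Icc] at ha
          obtain ⟨⟨h1, h2⟩, h3, h4⟩ := ha
          rw [mem_union, mem_range, mem_filter, mem_range]
          by_cases haz : a < z
          · exact Or.inl haz
          · refine Or.inr ⟨by omega, fun p hp hor => ?_⟩
            have hpz := Nat.lt_of_mem_primesBelow (mem_filter.1 hp).1
            have hpp := (hT p hp).1
            rcases hor with h | h
            · have := (Nat.prime_dvd_prime_iff_eq hpp h3).1 h
              omega
            · have := (Nat.prime_dvd_prime_iff_eq hpp h4).1 h
              omega
      _ ≤ _ := (card_union_le _ _).trans (by rw [card_range])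
  have hcount' : (primePairCounting n x : ℝ) ≤
      z + (#{a ∈ range (⌊x⌋₊ + 1) | ∀ p ∈ T, ¬ (p ∣ a ∨ p ∣ a + 2 * n)} : ℝ) := by
    exact_mod_cast hcount
  have hmain : ((⌊x⌋₊ + 1 : ℕ):ℝ) * ∑ I ∈ T.powerset with #I ≤ m, (-1:ℝ) ^ #I * ∏ p ∈ I, (2 / (p:ℝ))
      ≤ ((⌊x⌋₊ + 1 : ℕ):ℝ) * (c / (Real.log z)^2 + Real.exp (6 * (4 * (1 + Real.log K)) - m)) := by
    apply mul_le_mul_of_nonneg_left _ (Nat.cast_nonneg _)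
    linarith [hcz z hz]
  linarith

lemma final_ineq (c x L l : ℝ) (hc : 0 < c) (P : ℝ) (hL : L = Real.log x) (hl : l = Real.log L)
    (hx : 1 ≤ x) (hl26 : 26 ≤ l) (hLl : 112 * l ≤ L) (hexp : L^2 ≤ Real.exp (L/2))
    (hP : ∀ (z m K : ℕ), 2 ≤ z → Even m → z ≤ 2 ^ (K+1) →
    P ≤ z + (⌊x⌋₊ + 1 : ℕ) *
      (c / (Real.log z)^2 + Real.exp (6 * (4 * (1 + Real.log K)) - m)) + Real.exp 2 * (z:ℝ)^m) :
    P ≤ (11 + 25088 * c) * x * l^2 / L^2 := by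
  have hlpos : 0 < l := by linarith
  have hLpos : 0 < L := by linarith
  have hxpos : 0 < x := by linarith
  have hexL : Real.exp L = x := by rw [hL, Real.exp_log hxpos]
  have hexl : Real.exp l = L := by rw [hl, Real.exp_log hLpos]
  set u := L / (56 * l) with hu
  have hu2 : 2 ≤ u := by rw [hu, le_div_iff₀ (by positivity)]; linarith
  have huL : u ≤ L / 2 := by
    rw [hu]; apply div_le_div_of_nonneg_left hLpos.le (by norm_num) (by linarith)
  set z := ⌊Real.exp u⌋₊ with hz
  have hzle : (z:ℝ) ≤ Real.exp u := Nat.floor_le (by positivity)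
  have hw2 : 2 ≤ Real.exp (u/2) := by linarith [Real.add_one_le_exp (u/2)]
  have hzge : Real.exp (u/2) ≤ z := by
    have h1 := Nat.lt_floor_add_one (Real.exp u)
    have h2 : Real.exp u = Real.exp (u/2) * Real.exp (u/2) := by
      rw [← Real.exp_add]; congr 1; ring
    rw [← hz] at h1
    nlinarith
  have hz2 : 2 ≤ z := by exact_mod_cast hw2.trans hzge
  have hlogz : u / 2 ≤ Real.log z := by
    rw [Real.le_log_iff_exp_le (by linarith)]; exact hzge
  set k := ⌊14 * l⌋₊ with hk
  have hk1 : (k:ℝ) ≤ 14 * l := Nat.floor_le (by positivity)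
  have hk2 : 14 * l < k + 1 := Nat.lt_floor_add_one _
  set K := ⌊L⌋₊ with hKd
  have hK1 : (K:ℝ) ≤ L := Nat.floor_le hLpos.le
  have hK2 : L < K + 1 := Nat.lt_floor_add_one _
  have hKpos : (0:ℝ) < K := by linarith
  have hlogK : Real.log K ≤ l := by rw [hl]; exact Real.log_le_log hKpos hK1
  have hzK : z ≤ 2 ^ (K+1) := by
    have h1 : (z:ℝ) ≤ (2:ℝ) ^ (K+1) := by
      have e : ((2:ℝ) ^ (K+1)) = Real.exp ((K+1:ℕ) * Real.log 2) := by
        rw [Real.exp_nat_mul, Real.exp_log (by norm_num)]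
      rw [e]
      refine hzle.trans (Real.exp_le_exp.2 ?_)
      push_cast
      have := Real.log_two_gt_d9
      nlinarith
    exact_mod_cast h1
  have h := hP z (2 * k) K hz2 (even_two_mul k) hzK
  have hmain : c / (Real.log z)^2 ≤ 12544 * c * l^2 / L^2 := by
    have h1 : c / (Real.log z)^2 ≤ c / (u/2)^2 := by
      apply div_le_div_of_nonneg_left hc.le (by positivity)
      gcongr
    refine h1.trans (le_of_eq ?_)
    rw [hu]; field_simp; norm_num
  have htail : Real.exp (6 * (4 * (1 + Real.log K)) - (2 * k : ℕ)) ≤ 1 / L^2 := by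
    have e : 1 / L^2 = Real.exp (-(2 * l)) := by
      rw [Real.exp_neg, two_mul, Real.exp_add, hexl]; field_simp
    rw [e]
    apply Real.exp_le_exp.2
    push_cast; linarith
  have hpow : (z:ℝ)^(2*k) ≤ Real.exp (L/2) := by
    calc (z:ℝ)^(2*k) ≤ (Real.exp u)^(2*k) := by gcongr
      _ = Real.exp ((2*k:ℕ) * u) := by rw [Real.exp_nat_mul]
      _ ≤ _ := by
          apply Real.exp_le_exp.2
          have : L / 2 = 28 * l * u := by rw [hu]; field_simp; norm_num
          rw [this]; push_cast; nlinarith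
  have hhalf : Real.exp (L/2) ≤ x / L^2 := by
    rw [le_div_iff₀ (by positivity)]
    calc Real.exp (L/2) * L^2 ≤ Real.exp (L/2) * Real.exp (L/2) := by gcongr
      _ = x := by rw [← Real.exp_add, ← hexL]; congr 1; ring
  have hzx : (z:ℝ) ≤ x / L^2 := (hzle.trans (Real.exp_le_exp.2 huL)).trans hhalf
  have he2 : Real.exp 2 ≤ 8 := by
    have : Real.exp 2 = Real.exp 1 * Real.exp 1 := by rw [← Real.exp_add]; norm_num
    rw [this]; nlinarith [Real.exp_one_lt_d9, Real.exp_pos 1]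
  have hN : ((⌊x⌋₊ + 1 : ℕ):ℝ) ≤ 2 * x := by
    push_cast; linarith [Nat.floor_le hxpos.le]
  have hA : ((⌊x⌋₊ + 1 : ℕ):ℝ) *
      (c / (Real.log z)^2 + Real.exp (6 * (4 * (1 + Real.log K)) - (2 * k : ℕ))) ≤
      2 * x * (12544 * c * l^2 / L^2 + 1 / L^2) := by
    apply mul_le_mul hN (by linarith) (by positivity) (by positivity)
  have hB : Real.exp 2 * (z:ℝ)^(2*k) ≤ 8 * (x / L^2) :=
    mul_le_mul he2 (hpow.trans hhalf) (by positivity) (by norm_num)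
  have hC : P ≤ 11 * (x / L^2) + 25088 * c * (x * l^2 / L^2) := by
    have : 2 * x * (12544 * c * l^2 / L^2 + 1 / L^2) =
      2 * (x / L^2) + 25088 * c * (x * l^2 / L^2) := by ring
    linarith
  have hD : x / L^2 ≤ x * l^2 / L^2 := by
    apply div_le_div_of_nonneg_right _ (by positivity)
    exact le_mul_of_one_le_right hxpos.le (one_le_pow₀ (by linarith))
  calc P ≤ 11 * (x * l^2 / L^2) + 25088 * c * (x * l^2 / L^2) := by linarith
    _ = _ := by ring


end BrunSieve

/-- For every positive integer `n`, the number of prime pairs `p, p + 2n` with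
`p ≤ x` is `O(x (log log x)² / (log x)²)`. -/
theorem primePairCounting_bigO (n : ℕ) (hn : 0 < n) :
    ∃ C : ℝ, 0 < C ∧ ∃ x₀ : ℝ, 3 ≤ x₀ ∧ ∀ x : ℝ, x₀ ≤ x →
      (primePairCounting n x : ℝ) ≤
        C * x * (Real.log (Real.log x)) ^ 2 / (Real.log x) ^ 2 := by
  obtain ⟨c, hc, h⟩ := combine n hn
  refine ⟨11 + 25088 * c, by positivity, ?_⟩
  have hL : Filter.Tendsto Real.log Filter.atTop Filter.atTop := Real.tendsto_log_atTop
  have e1 : ∀ᶠ x : ℝ in Filter.atTop, 26 ≤ Real.log (Real.log x) :=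
    (hL.comp hL).eventually_ge_atTop 26
  have e2 : ∀ᶠ y : ℝ in Filter.atTop, 112 * Real.log y ≤ y := by
    have := Real.isLittleO_log_id_atTop.bound (c := 1/112) (by norm_num)
    filter_upwards [this, Filter.eventually_ge_atTop 1] with y hy hy1
    rw [Real.norm_of_nonneg (Real.log_nonneg hy1), id, Real.norm_of_nonneg (by linarith)] at hy
    linarith
  have e3 : ∀ᶠ y : ℝ in Filter.atTop, y^2 ≤ Real.exp (y/2) := by
    have h1 := (isLittleO_pow_exp_pos_mul_atTop (k := 2) (b := 1/2) (by norm_num)).bound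
      (c := 1) (by norm_num)
    filter_upwards [h1] with y hy
    rw [Real.norm_of_nonneg (by positivity), Real.norm_of_nonneg (by positivity), one_mul] at hy
    rwa [show y / 2 = 1 / 2 * y by ring]
  obtain ⟨x₁, hx₁⟩ := Filter.eventually_atTop.1 (e1.and ((hL.eventually e2).and (hL.eventually e3)))
  refine ⟨max 3 x₁, le_max_left _ _, fun x hx => ?_⟩
  obtain ⟨h1, h2, h3⟩ := hx₁ x ((le_max_right _ _).trans hx)
  have hx3 : 3 ≤ x := (le_max_left _ _).trans hx
  exact final_ineq c x _ _ hc _ rfl rfl (by linarith) h1 h2 h3 (h x)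
end
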